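/- Let f_1 and f_2 be self-usage utility functions with f_1'(x) > f_2'(x) for all x ∈ [0,1), and let p_a, B_a, p_b ≥ 0 with p_b < p_a + B_a < min(f_1'(0), f_2'(0)). For i = 1, 2 let s_{ia}, s_{ib} ∈ (0,1) satisfy f_i'(1−s_{ia}) = p_a + B_a and f_i'(1−s_{ib}) = p_b. Then (p_a + B_a − p_b)·s_{2a} − (f_2(1−s_{2b}) − f_2(1−s_{2a}) − p_b·(s_{2a} − s_{2b})) > (p_a + B_a − p_b)·s_{1a} − (f_1(1−s_{1b}) − f_1(1−s_{1a}) − p_b·(s_{1a} − s_{1b})). Consequently, under a linear loyalty program with bonus B_a, the threshold bound required to attract owner 1 is strictly tighter than that required to attract owner 2, so whenever platform a attracts owner 1 it also attracts owner 2. -/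

import Mathlib

/-- A self-usage utility function `f` with derivative `f'`:
differentiable on `[0,1]`, strictly increasing on `[0,1]`,
strictly concave on `[0,1]` (with `f'` strictly decreasing), and `f' 1 = 0`. -/
def SelfUsage (f f' : ℝ → ℝ) : Prop :=
  (∀ x ∈ Set.Icc (0:ℝ) 1, HasDerivWithinAt f (f' x) (Set.Icc (0:ℝ) 1) x) ∧
  StrictMonoOn f (Set.Icc (0:ℝ) 1) ∧
  StrictConcaveOn ℝ (Set.Icc (0:ℝ) 1) f ∧
  StrictAntiOn f' (Set.Icc (0:ℝ) 1) ∧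
  f' 1 = 0
theorem SelfUsage.hasDerivAt_aux {f f' : ℝ → ℝ} (hf : SelfUsage f f') {x : ℝ}
    (hx : x ∈ Set.Ioo (0:ℝ) 1) : HasDerivAt f (f' x) x :=
  (hf.1 x (Set.Ioo_subset_Icc_self hx)).hasDerivAt (Icc_mem_nhds hx.1 hx.2)

theorem SelfUsage.continuousOn_aux {f f' : ℝ → ℝ} (hf : SelfUsage f f') :
    ContinuousOn f (Set.Icc (0:ℝ) 1) :=
  fun x hx => (hf.1 x hx).continuousWithinAt

theorem SelfUsage.mvt_aux {f f' : ℝ → ℝ} (hf : SelfUsage f f') {u v : ℝ}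
    (hu : 0 ≤ u) (huv : u < v) (hv : v ≤ 1) :
    f' v * (v - u) < f v - f u ∧ f v - f u < f' u * (v - u) := by
  obtain ⟨c, hc, he⟩ := exists_hasDerivAt_eq_slope f f' huv
    (hf.continuousOn_aux.mono (Set.Icc_subset_Icc hu hv))
    (fun x hx => hf.hasDerivAt_aux ⟨hu.trans_lt hx.1, hx.2.trans_le hv⟩)
  have hvu : 0 < v - u := sub_pos.2 huv
  rw [eq_div_iff hvu.ne'] at he
  rw [← he]
  have hcI : c ∈ Set.Icc (0:ℝ) 1 := ⟨hu.trans hc.1.le, hc.2.le.trans hv⟩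
  exact ⟨mul_lt_mul_of_pos_right (hf.2.2.2.1 hcI ⟨hu.trans huv.le, hv⟩ hc.2) hvu,
    mul_lt_mul_of_pos_right (hf.2.2.2.1 ⟨hu, huv.le.trans hv⟩ hcI hc.1) hvu⟩

theorem SelfUsage.diff_aux {f f' g g' : ℝ → ℝ} (hf : SelfUsage f f') (hg : SelfUsage g g')
    (horder : ∀ x ∈ Set.Ico (0:ℝ) 1, g' x < f' x) {u v : ℝ}
    (hu : 0 ≤ u) (huv : u ≤ v) (hv : v ≤ 1) : g v - g u ≤ f v - f u := by
  rcases huv.eq_or_lt with rfl | huv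
  · simp
  obtain ⟨c, hc, he⟩ := exists_hasDerivAt_eq_slope (fun x => f x - g x) (fun x => f' x - g' x) huv
    ((hf.continuousOn_aux.sub hg.continuousOn_aux).mono (Set.Icc_subset_Icc hu hv))
    (fun x hx => (hf.hasDerivAt_aux ⟨hu.trans_lt hx.1, hx.2.trans_le hv⟩).sub
      (hg.hasDerivAt_aux ⟨hu.trans_lt hx.1, hx.2.trans_le hv⟩))
  have hvu : 0 < v - u := sub_pos.2 huv
  rw [eq_div_iff hvu.ne'] at he
  have := mul_pos (sub_pos.2 (horder c ⟨hu.trans hc.1.le, hc.2.trans_le hv⟩)) hvu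
  linarith

/-- under a linear loyalty program with bonus B_a, the threshold
bound required to attract owner 1 is strictly tighter than for owner 2. -/
theorem LLP_owner1_threshold_tighter
    (f1 f1' f2 f2' : ℝ → ℝ) (hf1 : SelfUsage f1 f1') (hf2 : SelfUsage f2 f2')
    (horder : ∀ x ∈ Set.Ico (0:ℝ) 1, f2' x < f1' x)
    (pa Ba pb : ℝ) (hpa : 0 ≤ pa) (hBa : 0 ≤ Ba) (hpb : 0 ≤ pb)
    (h1 : pb < pa + Ba) (h2 : pa + Ba < min (f1' 0) (f2' 0))
    (s1a s1b s2a s2b : ℝ)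
    (h1a : s1a ∈ Set.Ioo (0:ℝ) 1) (h1b : s1b ∈ Set.Ioo (0:ℝ) 1)
    (h2a : s2a ∈ Set.Ioo (0:ℝ) 1) (h2b : s2b ∈ Set.Ioo (0:ℝ) 1)
    (hd1a : f1' (1 - s1a) = pa + Ba) (hd1b : f1' (1 - s1b) = pb)
    (hd2a : f2' (1 - s2a) = pa + Ba) (hd2b : f2' (1 - s2b) = pb) :
    (pa + Ba - pb) * s1a - (f1 (1 - s1b) - f1 (1 - s1a) - pb * (s1a - s1b))
      < (pa + Ba - pb) * s2a - (f2 (1 - s2b) - f2 (1 - s2a) - pb * (s2a - s2b)) := by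
  have key : ∀ x y p : ℝ, x ∈ Set.Ioo (0:ℝ) 1 → y ∈ Set.Ioo (0:ℝ) 1 → f1' (1 - x) = p →
      f2' (1 - y) = p → x < y := by
    intro x y p hx hy hxp hyp
    by_contra! h
    have e1 := horder (1 - x) ⟨by linarith [hx.2], by linarith [hx.1]⟩
    have e2 := hf2.2.2.2.1.antitoneOn (a := 1 - x) (b := 1 - y)
      ⟨by linarith [hx.2], by linarith [hx.1]⟩
      ⟨by linarith [hy.2], by linarith [hy.1]⟩ (by linarith)
    linarith
  have ka := key _ _ _ h1a h2a hd1a hd2a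
  have kb := key _ _ _ h1b h2b hd1b hd2b
  have ord : ∀ f f' : ℝ → ℝ, SelfUsage f f' → ∀ x y : ℝ, x ∈ Set.Ioo (0:ℝ) 1 →
      y ∈ Set.Ioo (0:ℝ) 1 → f' (1 - x) = pa + Ba → f' (1 - y) = pb → y < x := by
    intro f f' hf x y hx hy hxp hyp
    by_contra! h
    have e2 := hf.2.2.2.1.antitoneOn (a := 1 - y) (b := 1 - x)
      ⟨by linarith [hy.2], by linarith [hy.1]⟩
      ⟨by linarith [hx.2], by linarith [hx.1]⟩ (by linarith)
    linarith
  have o1 := ord _ _ hf1 _ _ h1a h1b hd1a hd1b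
  have o2 := ord _ _ hf2 _ _ h2a h2b hd2a hd2b
  obtain ⟨a0, a1⟩ := h1a
  obtain ⟨b0, b1⟩ := h1b
  obtain ⟨c0, c1⟩ := h2a
  obtain ⟨d0, d1⟩ := h2b
  rcases le_or_gt s2b s1a with h | h
  · have m1 := (hf1.mvt_aux (u := 1 - s2b) (v := 1 - s1b) (by linarith) (by linarith)
      (by linarith)).1
    have m2 := (hf2.mvt_aux (u := 1 - s2a) (v := 1 - s1a) (by linarith) (by linarith)
      (by linarith)).2
    have m3 := hf1.diff_aux hf2 horder (u := 1 - s1a) (v := 1 - s2b) (by linarith) (by linarith)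
      (by linarith)
    rw [hd1b] at m1
    rw [hd2a] at m2
    nlinarith
  · have m1 := (hf1.mvt_aux (u := 1 - s1a) (v := 1 - s1b) (by linarith) (by linarith)
      (by linarith)).1
    have m2 := (hf2.mvt_aux (u := 1 - s2a) (v := 1 - s2b) (by linarith) (by linarith)
      (by linarith)).2
    rw [hd1b] at m1
    rw [hd2a] at m2
    have m3 := mul_pos (sub_pos.2 h1) (sub_pos.2 h)
    nlinarith
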